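/- Let A be an abelian category. Let i : X' ⟶ X and p : X ⟶ X'' form a short exact sequence (i mono, p epi, exact at X). Let B be a projective object, and suppose given t : T ⟶ X, u : T ⟶ B, q : B ⟶ X'' with t ≫ p = u ≫ q. Then there exist t' : T ⟶ X' and morphisms a : T ⟶ B, b : B ⟶ X such that t' ≫ i = t + a ≫ b. (This is the concrete content of the statement that, in the quotient modulo morphisms factoring through bijective objects, the residue class of i is a weak kernel of the residue class of p.) -/

import Mathlib

open CategoryTheory CategoryTheory.Limits

/-- Let `i : X' ⟶ X`, `p : X ⟶ X''` be a short exact sequence in an abelian category, `B` a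
projective object, and suppose `t : T ⟶ X`, `u : T ⟶ B`, `q : B ⟶ X''` satisfy
`t ≫ p = u ≫ q`. Then there are `t' : T ⟶ X'` and `a : T ⟶ B`, `b : B ⟶ X` with
`t' ≫ i = t + a ≫ b`: modulo morphisms factoring through bijective objects, `i` is a weak
kernel of `p`. -/
theorem weakKernel_of_shortExact_mod_projective {A : Type*} [Category A] [Abelian A]
    {X' X X'' T B : A} (i : X' ⟶ X) (p : X ⟶ X'')
    (hi : Mono i) (hp : Epi p) (hw : i ≫ p = 0)
    (hexact : (ShortComplex.mk i p hw).Exact)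
    (hB : Projective B)
    (t : T ⟶ X) (u : T ⟶ B) (q : B ⟶ X'') (h : t ≫ p = u ≫ q) :
    ∃ (t' : T ⟶ X') (a : T ⟶ B) (b : B ⟶ X), t' ≫ i = t + a ≫ b := by
  -- Lift `q` along `p` to `b : B ⟶ X`; then `t - u ≫ b` is killed by `p`, so it factors through `i`.
  have hk : (t + (-u) ≫ Projective.factorThru q p) ≫ p = 0 := by
    simp [h]
  exact ⟨hexact.lift _ hk, -u, Projective.factorThru q p, hexact.lift_f _ hk⟩
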